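/- arXiv:2412.10398 — 2 statements merged into one kernel-verified Lean document; each statement's English description precedes it below -/
import Mathlib

section
/- Let A and B be positive invertible bounded operators on a complex Hilbert space, and let t ∈ [−1/2, 0] ∪ [1, 3/2]. Then ‖A sp_t B‖ ≤ ‖A^{(1−t)/2} B^{t} A^{(1−t)/2}‖ ≤ ‖A ♯_t B‖, where ‖·‖ is the operator norm. -/
noncomputable section

variable {H : Type*} [NormedAddCommGroup H] [InnerProductSpace ℂ H] [CompleteSpace H]

/-- Real power of a bounded operator, via the continuous functional calculus. -/
def opPow (A : H →L[ℂ] H) (t : ℝ) : H →L[ℂ] H := cfc (fun x : ℝ => x ^ t) A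

/-- The logarithm of a bounded operator, via the continuous functional calculus. -/
def opLog (A : H →L[ℂ] H) : H →L[ℂ] H := cfc Real.log A

/-- The exponential of a bounded operator, via the continuous functional calculus. -/
def opExp (A : H →L[ℂ] H) : H →L[ℂ] H := cfc Real.exp A

/-- The weighted geometric mean `A ♯ₜ B = A^(1/2) (A^(-1/2) B A^(-1/2))^t A^(1/2)`. -/
def geoMean (A B : H →L[ℂ] H) (t : ℝ) : H →L[ℂ] H :=
  opPow A (1/2) * opPow (opPow A (-(1/2)) * B * opPow A (-(1/2))) t * opPow A (1/2)

/-- The weighted spectral geometric mean `A spₜ B = (A⁻¹ ♯ B)^t A (A⁻¹ ♯ B)^t`,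
where `A ♯ B` is the (unweighted, `t = 1/2`) geometric mean. -/
def spMean (A B : H →L[ℂ] H) (t : ℝ) : H →L[ℂ] H :=
  opPow (geoMean (Ring.inverse A) B (1/2)) t * A * opPow (geoMean (Ring.inverse A) B (1/2)) t

/-- The generalized Kantorovich constant `K(m, M, p)`. -/
def Kan (m M p : ℝ) : ℝ :=
  ((m * M ^ p - M * m ^ p) / ((p - 1) * (M - m))) *
    (((p - 1) / p) * ((M ^ p - m ^ p) / (m * M ^ p - M * m ^ p))) ^ p

/-- The generalized Kantorovich constant `K(h, p)` (one-parameter form). -/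
def Kan' (h p : ℝ) : ℝ :=
  ((h ^ p - h) / ((p - 1) * (h - 1))) * (((p - 1) / p) * ((h ^ p - 1) / (h ^ p - h))) ^ p

section General

variable {R : Type*} [CStarAlgebra R] [PartialOrder R] [StarOrderedRing R]

lemma rr {a : R} (ha : IsStrictlyPositive a) (x y : ℝ) : (a ^ x) ^ y = a ^ (x * y) := by
  rcases eq_or_ne x 0 with rfl | hx
  · rw [CFC.rpow_zero a ha.nonneg, zero_mul, CFC.rpow_zero a ha.nonneg, CFC.one_rpow]
  · exact CFC.rpow_rpow a x y hx ha

lemma pp {a : R} (ha : IsStrictlyPositive a) (x y : ℝ) : a ^ x * a ^ y = a ^ (x + y) :=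
  (CFC.rpow_add ha.isUnit).symm

lemma pp' {a : R} (ha : IsStrictlyPositive a) (x y : ℝ) (z : R) :
    a ^ x * (a ^ y * z) = a ^ (x + y) * z := by
  rw [← mul_assoc, pp ha]

lemma sp {a : R} (ha : IsStrictlyPositive a) (x : ℝ) : IsStrictlyPositive (a ^ x) :=
  IsStrictlyPositive.rpow a x ha

lemma cj {a b : R} (ha : IsStrictlyPositive a) (hb : IsStrictlyPositive b) :
    IsStrictlyPositive (b * a * b) :=
  IsStrictlyPositive.conjugate_of_isUnit_of_isSelfAdjoint a b hb.isUnit hb.isSelfAdjoint ha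

lemma cjle {a b c : R} (hab : a ≤ b) (hc : IsStrictlyPositive c) : c * a * c ≤ c * b * c :=
  IsSelfAdjoint.conjugate_le_conjugate hab hc.isSelfAdjoint

lemma smul_rp {a : R} (ha : IsStrictlyPositive a) {c : ℝ} (hc : 0 < c) (y : ℝ) :
    (c • a) ^ y = (c ^ y) • a ^ y := by
  have h0 : ∀ x ∈ spectrum ℝ a, 0 < x := fun x hx => ha.spectrum_pos hx
  have hcont : ContinuousOn (fun x : ℝ => x ^ y) (spectrum ℝ a) := fun x hx =>
    (Real.continuousAt_rpow_const x y (Or.inl (h0 x hx).ne')).continuousWithinAt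
  have h1 : c • a = cfc (fun x : ℝ => c * x) a := by
    rw [cfc_const_mul_id c a ha.isSelfAdjoint]
  rw [h1, CFC.cfc_rpow (fun x hx => mul_pos hc (h0 x hx)) (by fun_prop) ha.isSelfAdjoint,
    CFC.rpow_eq_cfc_real ha.nonneg, ← cfc_smul (R := ℝ) (c ^ y) _ a hcont]
  refine cfc_congr fun x hx => ?_
  simp only [smul_eq_mul]
  exact Real.mul_rpow hc.le (h0 x hx).le

lemma anti {a b : R} (ha : IsStrictlyPositive a) (hab : a ≤ b) {y : ℝ} (h1 : -1 ≤ y)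
    (h0 : y ≤ 0) : b ^ y ≤ a ^ y := by
  have hb : IsStrictlyPositive b := ha.of_le hab
  have h := CFC.rpow_le_rpow (p := -y) ⟨by linarith, by linarith⟩ hab
  have h2 := CStarAlgebra.ringInverse_le_ringInverse h (sp ha _)
  rw [CFC.inverse_eq_rpow_neg_one (sp ha _), CFC.inverse_eq_rpow_neg_one (sp hb _),
    rr ha, rr hb] at h2
  simpa using h2

lemma norm_iff {a x : R} (ha : IsStrictlyPositive a) (hx : IsStrictlyPositive x) (p : ℝ)
    {μ : ℝ} (hμ : 0 ≤ μ) :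
    ‖x ^ p * a * x ^ p‖ ≤ μ ↔ a ≤ μ • x ^ (-(2 * p)) := by
  rw [CStarAlgebra.norm_le_iff_le_algebraMap _ hμ (cj ha (sp hx _)).nonneg,
    Algebra.algebraMap_eq_smul_one]
  constructor
  · intro h
    have h2 := cjle h (sp hx (-p))
    simp only [mul_assoc, pp hx, pp' hx, mul_smul_comm, smul_mul_assoc, mul_one, one_mul] at h2
    simp only [add_neg_cancel, neg_add_cancel, CFC.rpow_zero x hx.nonneg, one_mul, mul_one] at h2
    convert h2 using 3
    ring
  · intro h
    have h2 := cjle h (sp hx p)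
    simp only [mul_assoc, pp hx, pp' hx, mul_smul_comm, smul_mul_assoc, mul_one, one_mul] at h2
    rw [show p + -(2 * p) + p = 0 by ring, CFC.rpow_zero x hx.nonneg] at h2
    simpa only [mul_assoc] using h2

lemma unit_conj {T u : R} (hT : IsStrictlyPositive T) (hu : u ∈ unitary R) (r : ℝ) :
    (u * T * star u) ^ r = u * T ^ r * star u := by
  have huu : IsUnit u := ⟨⟨u, star u, (Unitary.mem_iff.1 hu).2, (Unitary.mem_iff.1 hu).1⟩, rfl⟩
  have hS : IsStrictlyPositive (u * T * star u) :=
    huu.isStrictlyPositive_star_right_conjugate_iff.2 hT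
  have h0 : ∀ x ∈ spectrum ℝ T, 0 < x := fun x hx => hT.spectrum_pos hx
  have hcont : ContinuousOn (fun x : ℝ => x ^ r) (spectrum ℝ T) := fun x hx =>
    (Real.continuousAt_rpow_const x r (Or.inl (h0 x hx).ne')).continuousWithinAt
  rw [CFC.rpow_eq_cfc_real hS.nonneg, CFC.rpow_eq_cfc_real hT.nonneg]
  have := StarAlgHomClass.map_cfc (S := ℂ) (R := ℝ) (Unitary.conjStarAlgAut ℂ R ⟨u, hu⟩)
    (fun x : ℝ => x ^ r) T hcont
    (by change Continuous fun x => (Unitary.conjStarAlgAut ℂ R ⟨u, hu⟩) x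
        simp only [Unitary.conjStarAlgAut_apply]
        fun_prop)
    hT.isSelfAdjoint (by simpa using hS.isSelfAdjoint)
  simpa using this.symm

lemma key {p w : R} (hp : IsStrictlyPositive p) (hw : IsStrictlyPositive w) (r : ℝ) :
    (p * (w * w) * p) ^ r = p * w * (w * (p * p) * w) ^ (r - 1) * (w * p) := by
  have hpp : IsStrictlyPositive (p * p) := by simpa using cj isStrictlyPositive_one hp
  set T := w * (p * p) * w with hTd
  have hT : IsStrictlyPositive T := cj hpp hw
  set u := p * w * T ^ (-(1/2) : ℝ) with hud
  have hsu : star u = T ^ (-(1/2) : ℝ) * (w * p) := by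
    simp [hud, star_mul, hp.isSelfAdjoint.star_eq, hw.isSelfAdjoint.star_eq,
      (sp hT _).isSelfAdjoint.star_eq]
  have huu : IsUnit u := (hp.isUnit.mul hw.isUnit).mul (sp hT _).isUnit
  have h1 : star u * u = 1 := by
    rw [hsu, hud, ← CFC.conjugate_rpow_neg_one_half T hT]
    simp only [hTd, mul_assoc]
  have h2 : u * star u = 1 := by
    obtain ⟨v, hv⟩ := huu
    rw [← hv] at h1 ⊢
    rw [Units.mul_eq_one_iff_eq_inv] at h1
    rw [h1]; simp
  have hmem : u ∈ unitary R := Unitary.mem_iff.2 ⟨h1, h2⟩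
  have hT1 : T = T ^ (1 : ℝ) := (CFC.rpow_one T hT.nonneg).symm
  have h3 : ∀ y : ℝ, u * T ^ y * star u = p * w * T ^ (y - 1) * (w * p) := by
    intro y
    rw [hsu, hud]
    simp only [mul_assoc, pp' hT]
    rw [show -(1/2) + (y + -(1/2)) = y - 1 by ring]
  have h4 : p * (w * w) * p = u * T * star u := by
    have := h3 1
    rw [CFC.rpow_one T hT.nonneg] at this
    rw [this, sub_self, CFC.rpow_zero T hT.nonneg]
    simp only [mul_assoc, mul_one, one_mul]
  rw [h4, unit_conj hT hmem, h3]

lemma L1 [Nontrivial R] {P Q G : R} (hP : IsStrictlyPositive P) (hQ : IsStrictlyPositive Q)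
    (hG : IsStrictlyPositive G) (h : G * P * G = Q) {s : ℝ} (hs0 : 0 ≤ s) (hs1 : s ≤ 1 / 2) :
    ‖G ^ (-s) * P * G ^ (-s)‖ ≤ ‖P ^ ((1 + s) / 2) * Q ^ (-s) * P ^ ((1 + s) / 2)‖ := by
  set l := ‖P ^ ((1 + s) / 2) * Q ^ (-s) * P ^ ((1 + s) / 2)‖ with hl
  have hl0 : 0 < l := norm_pos_iff.2 (cj (sp hQ _) (sp hP _)).isUnit.ne_zero
  have h1s : (1 + s) ≠ 0 := by positivity
  have h1 := (norm_iff (sp hQ (-s)) hP ((1 + s) / 2) hl0.le).1 le_rfl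
  have h2 := anti (sp hQ (-s)) h1 (y := -(1 / (1 + s)))
    (by
      have : 1 / (1 + s) ≤ 1 := by rw [div_le_one (by positivity)]; linarith
      linarith)
    (by
      have : 0 ≤ 1 / (1 + s) := by positivity
      linarith)
  rw [smul_rp (sp hP _) hl0, rr hP, rr hQ] at h2
  set c := l ^ (-(1 / (1 + s))) with hc
  have hc0 : 0 < c := Real.rpow_pos_of_pos hl0 _
  set k := s / (1 + s) with hk
  rw [show -(2 * ((1 + s) / 2)) * -(1 / (1 + s)) = 1 by field_simp,
    show -s * -(1 / (1 + s)) = k by rw [hk]; ring, CFC.rpow_one P hP.nonneg] at h2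
  have h3 := cjle h2 hG
  rw [mul_smul_comm, smul_mul_assoc, h] at h3
  have h4 := cjle h3 (sp hQ (k / 2))
  have hM : IsStrictlyPositive (Q ^ (k / 2) * G * Q ^ (k / 2)) := cj hG (sp hQ _)
  set M := Q ^ (k / 2) * G * Q ^ (k / 2) with hMd
  have e1 : Q ^ (k / 2) * (c • Q) * Q ^ (k / 2) = c • Q ^ (1 + k) := by
    have : Q ^ (k / 2) * (c • Q ^ (1 : ℝ)) * Q ^ (k / 2) = c • Q ^ (1 + k) := by
      rw [mul_smul_comm, smul_mul_assoc, pp hQ, pp hQ]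
      congr 2; ring
    rwa [CFC.rpow_one Q hQ.nonneg] at this
  have e2 : Q ^ (k / 2) * (G * Q ^ k * G) * Q ^ (k / 2) = M * M := by
    rw [show Q ^ k = Q ^ (k / 2) * Q ^ (k / 2) by rw [pp hQ]; congr 1; ring, hMd]
    simp only [mul_assoc]
  rw [e1, e2] at h4
  have h5 := CFC.sqrt_le_sqrt _ _ h4
  rw [CFC.sqrt_mul_self M hM.nonneg, CFC.sqrt_eq_rpow, smul_rp (sp hQ _) hc0, rr hQ] at h5
  have h6 := cjle h5 (sp hQ (-(k / 2)))
  have e3 : Q ^ (-(k / 2)) * M * Q ^ (-(k / 2)) = G := by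
    rw [hMd]
    simp only [mul_assoc, pp hQ, pp' hQ]
    simp [CFC.rpow_zero Q hQ.nonneg]
  rw [e3, mul_smul_comm, smul_mul_assoc, pp hQ, pp hQ] at h6
  have h7 := CFC.rpow_le_rpow (p := 2 * s) ⟨by linarith, by linarith⟩ h6
  rw [smul_rp (sp hQ _) (by positivity), rr hQ, ← Real.rpow_mul hc0.le,
    show (-(k / 2) + (1 + k) * (1 / 2) + -(k / 2)) * (2 * s) = k by rw [hk]; field_simp; ring,
    show (1 / 2 : ℝ) * (2 * s) = s by ring] at h7
  have h8 : c ^ s • (c • P) ≤ G ^ (2 * s) :=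
    (smul_le_smul_of_nonneg_left h2 (by positivity)).trans h7
  have e4 : c ^ s * c = l⁻¹ := by
    conv_lhs => rw [← Real.rpow_one c, ← Real.rpow_mul hc0.le, one_mul, ← Real.rpow_add hc0, hc,
      ← Real.rpow_mul hl0.le]
    rw [show -(1 / (1 + s)) * (s + 1) = -1 by field_simp; ring, Real.rpow_neg_one]
  rw [smul_smul, e4] at h8
  rw [norm_iff hP hG (-s) hl0.le]
  have h9 := smul_le_smul_of_nonneg_left h8 hl0.le
  rw [smul_smul, mul_inv_cancel₀ hl0.ne', one_smul] at h9
  simpa using h9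

lemma L2 [Nontrivial R] {P Q : R} (hP : IsStrictlyPositive P) (hQ : IsStrictlyPositive Q)
    {s : ℝ} (hs0 : 0 ≤ s) (hs1 : s ≤ 1) :
    ‖P ^ ((1 + s) / 2) * Q ^ (-s) * P ^ ((1 + s) / 2)‖ ≤
      ‖P ^ (1 / 2 : ℝ) * (P ^ (-(1 / 2) : ℝ) * Q * P ^ (-(1 / 2) : ℝ)) ^ (-s) *
        P ^ (1 / 2 : ℝ)‖ := by
  set Z := P ^ (-(1 / 2) : ℝ) * Q * P ^ (-(1 / 2) : ℝ) with hZd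
  have hZ : IsStrictlyPositive Z := cj hQ (sp hP _)
  set l := ‖P ^ (1 / 2 : ℝ) * Z ^ (-s) * P ^ (1 / 2 : ℝ)‖ with hl
  have hl0 : 0 < l := norm_pos_iff.2 (cj (sp hZ _) (sp hP _)).isUnit.ne_zero
  have h1 := (norm_iff (sp hZ (-s)) hP (1 / 2) hl0.le).1 le_rfl
  rw [show -(2 * (1 / 2) : ℝ) = -1 by norm_num] at h1
  have hC : Q ^ (-1 : ℝ) = P ^ (-(1 / 2) : ℝ) * (Z ^ (-(1 / 2) : ℝ) * Z ^ (-(1 / 2) : ℝ)) *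
      P ^ (-(1 / 2) : ℝ) := by
    have hQZ : Q = P ^ (1 / 2 : ℝ) * Z * P ^ (1 / 2 : ℝ) := by
      rw [hZd]
      simp only [mul_assoc, pp hP, pp' hP]
      simp [CFC.rpow_zero P hP.nonneg]
    have e : P ^ (-(1 / 2) : ℝ) * (Z ^ (-(1 / 2) : ℝ) * Z ^ (-(1 / 2) : ℝ)) *
      P ^ (-(1 / 2) : ℝ) * Q = 1 := by
      have : P ^ (-(1 / 2) : ℝ) * (Z ^ (-(1 / 2) : ℝ) * Z ^ (-(1 / 2) : ℝ)) *
        P ^ (-(1 / 2) : ℝ) * (P ^ (1 / 2 : ℝ) * Z ^ (1 : ℝ) * P ^ (1 / 2 : ℝ)) = 1 := by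
        simp only [mul_assoc, pp hP, pp' hP]
        norm_num [CFC.rpow_zero P hP.nonneg, pp hZ, pp' hZ, CFC.rpow_zero Z hZ.nonneg, pp hP]
      rwa [CFC.rpow_one Z hZ.nonneg, ← hQZ] at this
    have e' : Q * Q ^ (-1 : ℝ) = 1 := by
      have := CFC.rpow_mul_rpow_neg (a := Q) 1 hQ
      rwa [CFC.rpow_one Q hQ.nonneg] at this
    exact (left_inv_eq_right_inv e e').symm
  have hk := key (sp hP (-(1 / 2))) (sp hZ (-(1 / 2))) s
  rw [← hC, rr hQ, show (-1 : ℝ) * s = -s by ring, pp hP,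
    show (-(1 / 2) + -(1 / 2) : ℝ) = -1 by norm_num] at hk
  have h2 := cjle h1 (sp hZ (-(1 / 2)))
  rw [pp hZ, pp hZ, mul_smul_comm, smul_mul_assoc] at h2
  have h3 := anti (sp hZ _) h2 (y := s - 1) (by linarith) (by linarith)
  rw [smul_rp (cj (sp hP _) (sp hZ _)) hl0, rr hZ] at h3
  have h4 := smul_le_smul_of_nonneg_left h3 (show 0 ≤ l ^ (1 - s) by positivity)
  rw [smul_smul, ← Real.rpow_add hl0, show 1 - s + (s - 1) = 0 by ring, Real.rpow_zero,
    one_smul] at h4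
  have h5 := cjle h4 (sp hZ (-(1 / 2)))
  rw [mul_smul_comm, smul_mul_assoc, pp hZ, pp hZ] at h5
  have h6 := CFC.rpow_le_rpow (p := s) ⟨hs0, hs1⟩ h1
  rw [rr hZ, smul_rp (sp hP _) hl0, rr hP] at h6
  rw [show -(1 / 2) + (-(1 / 2) + -s + -(1 / 2)) * (s - 1) + -(1 / 2) = -s * s by ring] at h5
  have h7 := h5.trans (smul_le_smul_of_nonneg_left h6 (show 0 ≤ l ^ (1 - s) by positivity))
  rw [smul_smul, ← Real.rpow_add hl0, show 1 - s + s = 1 by ring, Real.rpow_one] at h7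
  have h8 := cjle h7 (sp hP (-(1 / 2)))
  rw [mul_smul_comm, smul_mul_assoc, pp hP, pp hP] at h8
  rw [norm_iff (sp hQ _) hP _ hl0.le, hk]
  convert h8 using 1
  · simp only [mul_assoc]
  · congr 2; ring

lemma swap {P Q : R} (hP : IsStrictlyPositive P) (hQ : IsStrictlyPositive Q) (s : ℝ) :
    P ^ (1 / 2 : ℝ) * (P ^ (-(1 / 2) : ℝ) * Q * P ^ (-(1 / 2) : ℝ)) ^ (1 + s) * P ^ (1 / 2 : ℝ)
    = Q ^ (1 / 2 : ℝ) * (Q ^ (-(1 / 2) : ℝ) * P * Q ^ (-(1 / 2) : ℝ)) ^ (-s) *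
        Q ^ (1 / 2 : ℝ) := by
  have hk := key (sp hP (-(1 / 2))) (sp hQ (1 / 2)) (1 + s)
  rw [pp hQ, pp hP, show (1 / 2 + 1 / 2 : ℝ) = 1 by norm_num, CFC.rpow_one Q hQ.nonneg,
    show (-(1 / 2) + -(1 / 2) : ℝ) = -1 by norm_num] at hk
  rw [hk]
  set Z := Q ^ (-(1 / 2) : ℝ) * P * Q ^ (-(1 / 2) : ℝ) with hZd
  have hZ : IsStrictlyPositive Z := cj hP (sp hQ _)
  have e : Q ^ (1 / 2 : ℝ) * P ^ (-1 : ℝ) * Q ^ (1 / 2 : ℝ) = Z ^ (-1 : ℝ) := by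
    have e1 : Q ^ (1 / 2 : ℝ) * P ^ (-1 : ℝ) * Q ^ (1 / 2 : ℝ) * Z = 1 := by
      have : Q ^ (1 / 2 : ℝ) * P ^ (-1 : ℝ) * Q ^ (1 / 2 : ℝ) *
          (Q ^ (-(1 / 2) : ℝ) * P ^ (1 : ℝ) * Q ^ (-(1 / 2) : ℝ)) = 1 := by
        simp only [mul_assoc, pp hQ, pp' hQ]
        norm_num [CFC.rpow_zero P hP.nonneg, pp hP, pp' hP, CFC.rpow_zero Q hQ.nonneg, pp hQ]
      rwa [CFC.rpow_one P hP.nonneg] at this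
    have e' : Z * Z ^ (-1 : ℝ) = 1 := by
      have := CFC.rpow_mul_rpow_neg (a := Z) 1 hZ
      rwa [CFC.rpow_one Z hZ.nonneg] at this
    exact left_inv_eq_right_inv e1 e'
  rw [e, rr hZ, show -1 * (1 + s - 1) = -s by ring]
  simp only [mul_assoc, pp hP, pp' hP]
  simp [CFC.rpow_zero P hP.nonneg]

lemma midswap {P Q : R} (hP : IsStrictlyPositive P) (hQ : IsStrictlyPositive Q) (x y : ℝ) :
    ‖P ^ (x / 2) * Q ^ y * P ^ (x / 2)‖ = ‖Q ^ (y / 2) * P ^ x * Q ^ (y / 2)‖ := by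
  have h := CStarRing.norm_star_mul_self (x := Q ^ (y / 2) * P ^ (x / 2))
  have h' := CStarRing.norm_self_mul_star (x := Q ^ (y / 2) * P ^ (x / 2))
  rw [← h, star_mul, (sp hP _).isSelfAdjoint.star_eq, (sp hQ _).isSelfAdjoint.star_eq] at h'
  simp only [mul_assoc, pp' hP, pp' hQ, add_halves] at h' ⊢
  exact h'.symm

lemma riccati {P Q : R} (hP : IsStrictlyPositive P) (hQ : IsStrictlyPositive Q) {G : R}
    (hG : G = P ^ (-(1 / 2) : ℝ) * (P ^ (1 / 2 : ℝ) * Q * P ^ (1 / 2 : ℝ)) ^ (1 / 2 : ℝ) *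
      P ^ (-(1 / 2) : ℝ)) : IsStrictlyPositive G ∧ G * P * G = Q := by
  have hM : IsStrictlyPositive (P ^ (1 / 2 : ℝ) * Q * P ^ (1 / 2 : ℝ)) := cj hQ (sp hP _)
  refine ⟨hG ▸ cj (sp hM _) (sp hP _), ?_⟩
  have : G * P ^ (1 : ℝ) * G = Q := by
    rw [hG]
    simp only [mul_assoc, pp' hP]
    rw [show (-(1 / 2) + (1 + -(1 / 2)) : ℝ) = 0 by norm_num, CFC.rpow_zero P hP.nonneg, one_mul]
    simp only [← mul_assoc] at hM ⊢
    rw [mul_assoc (P ^ (-(1 / 2) : ℝ)), pp hM, add_halves, CFC.rpow_one _ hM.nonneg]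
    simp only [mul_assoc, pp hP, pp' hP]
    simp [CFC.rpow_zero P hP.nonneg]
  rwa [CFC.rpow_one P hP.nonneg] at this

end General

/-- Theorem 3.5: for positive invertible `A, B` and `t ∈ [-1/2, 0] ∪ [1, 3/2]`,
`‖A spₜ B‖ ≤ ‖A^((1-t)/2) B^t A^((1-t)/2)‖ ≤ ‖A ♯ₜ B‖`. -/
theorem stmt_11 (A B : H →L[ℂ] H) (hA : 0 ≤ A) (hA' : IsUnit A) (hB : 0 ≤ B) (hB' : IsUnit B)
    (t : ℝ) (ht : (-(1/2) ≤ t ∧ t ≤ 0) ∨ (1 ≤ t ∧ t ≤ 3/2)) :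
    ‖spMean A B t‖ ≤ ‖opPow A ((1 - t) / 2) * opPow B t * opPow A ((1 - t) / 2)‖ ∧
      ‖opPow A ((1 - t) / 2) * opPow B t * opPow A ((1 - t) / 2)‖ ≤ ‖geoMean A B t‖ := by
  rcases subsingleton_or_nontrivial (H →L[ℂ] H) with hsub | hnon
  · constructor <;> exact le_of_eq (congrArg _ (Subsingleton.elim _ _))
  have sA : IsStrictlyPositive A := hA'.isStrictlyPositive hA
  have sB : IsStrictlyPositive B := hB'.isStrictlyPositive hB
  have op : ∀ {X : H →L[ℂ] H}, IsStrictlyPositive X → ∀ y : ℝ, opPow X y = X ^ y :=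
    fun hX y => (CFC.rpow_eq_cfc_real hX.nonneg).symm
  have sZ : IsStrictlyPositive (A ^ (-(1 / 2) : ℝ) * B * A ^ (-(1 / 2) : ℝ)) := cj sB (sp sA _)
  have hgeo : geoMean A B t = A ^ (1 / 2 : ℝ) *
      (A ^ (-(1 / 2) : ℝ) * B * A ^ (-(1 / 2) : ℝ)) ^ t * A ^ (1 / 2 : ℝ) := by
    simp only [geoMean, op sA, op sZ]
  have sI : IsStrictlyPositive (A ^ (-1 : ℝ)) := sp sA _
  have hGe : geoMean (Ring.inverse A) B (1 / 2) = A ^ (-(1 / 2) : ℝ) *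
      (A ^ (1 / 2 : ℝ) * B * A ^ (1 / 2 : ℝ)) ^ (1 / 2 : ℝ) * A ^ (-(1 / 2) : ℝ) := by
    have sW : IsStrictlyPositive (A ^ (1 / 2 : ℝ) * B * A ^ (1 / 2 : ℝ)) := cj sB (sp sA _)
    rw [CFC.inverse_eq_rpow_neg_one sA]
    simp only [geoMean, op sI, rr sA]
    rw [show (-1 * -(1 / 2) : ℝ) = 1 / 2 by norm_num, show (-1 * (1 / 2) : ℝ) = -(1 / 2) by norm_num,
      op sW]
  obtain ⟨sG, hG⟩ := riccati sA sB hGe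
  rw [hgeo, op sA, op sB]
  simp only [spMean]
  set G := geoMean (Ring.inverse A) B (1 / 2) with hGd
  rw [op sG]
  rcases ht with ⟨h1, h2⟩ | ⟨h1, h2⟩
  · obtain ⟨s, rfl⟩ : ∃ s : ℝ, t = -s := ⟨-t, by ring⟩
    rw [sub_neg_eq_add]
    exact ⟨L1 sA sB sG hG (by linarith) (by linarith), L2 sA sB (by linarith) (by linarith)⟩
  · obtain ⟨s, rfl⟩ : ∃ s : ℝ, t = 1 + s := ⟨t - 1, by ring⟩
    rw [midswap sA sB, show 1 - (1 + s) = -s by ring, swap sA sB]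
    refine ⟨?_, L2 sB sA (by linarith) (by linarith)⟩
    have hG' : G ^ (-1 : ℝ) * B * G ^ (-1 : ℝ) = A := by
      have : G ^ (-1 : ℝ) * (G ^ (1 : ℝ) * A * G ^ (1 : ℝ)) * G ^ (-1 : ℝ) = A := by
        simp only [mul_assoc, pp sG, pp' sG]
        simp [CFC.rpow_zero G sG.nonneg]
      rwa [CFC.rpow_one G sG.nonneg, hG] at this
    have := L1 sB sA (sp sG (-1)) hG' (s := s) (by linarith) (by linarith)
    rw [rr sG, show -1 * -s = s by ring] at this
    have e : G ^ (1 + s) * A * G ^ (1 + s) = G ^ s * B * G ^ s := by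
      have : G ^ (1 + s) * A * G ^ (1 + s) = G ^ s * (G ^ (1 : ℝ) * A * G ^ (1 : ℝ)) * G ^ s := by
        simp only [mul_assoc, pp sG, pp' sG, add_comm]
      rwa [CFC.rpow_one G sG.nonneg, hG] at this
    rw [e]
    exact this
end
end

section
/- Let A and B be n×n positive definite complex matrices and let t satisfy −1/2 ≤ t ≤ 1 with t ≠ 0. Then −Tr T^{sp}_t(A|B) ≤ D_t(A|B) ≤ −Tr T_t(A|B); explicitly, Tr[(A − A sp_t B)/t] ≤ Tr[(A − A^{1−t}B^{t})/t] ≤ Tr[(A − A ♯_t B)/t]. -/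
noncomputable section

open Matrix
open scoped ComplexOrder

variable {n : ℕ}

/-- Real power of a matrix, via the (Hermitian) continuous functional calculus,
i.e. via diagonalization for Hermitian matrices. -/
def mPow (A : Matrix (Fin n) (Fin n) ℂ) (t : ℝ) : Matrix (Fin n) (Fin n) ℂ :=
  cfc (fun x : ℝ => x ^ t) A

/-- The logarithm of a matrix, via diagonalization for Hermitian matrices. -/
def mLog (A : Matrix (Fin n) (Fin n) ℂ) : Matrix (Fin n) (Fin n) ℂ :=
  cfc Real.log A

/-- The weighted geometric mean `A ♯ₜ B = A^(1/2) (A^(-1/2) B A^(-1/2))^t A^(1/2)`. -/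
def mGeo (A B : Matrix (Fin n) (Fin n) ℂ) (t : ℝ) : Matrix (Fin n) (Fin n) ℂ :=
  mPow A (1/2) * mPow (mPow A (-(1/2)) * B * mPow A (-(1/2))) t * mPow A (1/2)

/-- The weighted spectral geometric mean `A spₜ B = (A⁻¹ ♯ B)^t A (A⁻¹ ♯ B)^t`,
where `A ♯ B` is the (unweighted, `t = 1/2`) geometric mean. -/
def mSp (A B : Matrix (Fin n) (Fin n) ℂ) (t : ℝ) : Matrix (Fin n) (Fin n) ℂ :=
  mPow (mGeo A⁻¹ B (1/2)) t * A * mPow (mGeo A⁻¹ B (1/2)) t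

/-- The eigenvalues of a Hermitian matrix, listed in decreasing order
(junk value `0` for non-Hermitian matrices). -/
def eigsDec (A : Matrix (Fin n) (Fin n) ℂ) : Fin n → ℝ :=
  if hA : A.IsHermitian then
    fun j => (hA.eigenvalues ∘ Tuple.sort hA.eigenvalues) j.rev
  else 0

/-- Log-majorization `X ≺_log Y`: the products of the `k` largest eigenvalues satisfy
`∏_{j=1}^k λ_j(X) ≤ ∏_{j=1}^k λ_j(Y)` for `k = 1, …, n-1`, and `det X = det Y`. -/
def LogMaj (X Y : Matrix (Fin n) (Fin n) ℂ) : Prop :=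
  (∀ k : ℕ, k ≤ n - 1 →
      ∏ j ∈ Finset.univ.filter (fun j : Fin n => (j : ℕ) < k), eigsDec X j ≤
        ∏ j ∈ Finset.univ.filter (fun j : Fin n => (j : ℕ) < k), eigsDec Y j) ∧
    X.det = Y.det



open MeasureTheory Set in
theorem aux_neg {ι κ : Type} [Fintype ι] [Fintype κ] (p x : ι → ℝ) (q y : κ → ℝ)
    (hx : ∀ i, 0 < x i) (hy : ∀ i, 0 < y i)
    (h : ∀ s : ℝ, 0 < s → ∑ i, p i / (x i + s) ≤ ∑ j, q j / (y j + s))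
    (t : ℝ) (ht : -1 < t) (ht' : t < 0) :
    ∑ i, p i * x i ^ t ≤ ∑ j, q j * y j ^ t := by
  have hp : t + 1 ∈ Ioo (0:ℝ) 1 := ⟨by linarith, by linarith⟩
  have key : ∀ z : ℝ, 0 < z → z ^ t = (∫ u in Ioi 0, Real.rpowIntegrand₀₁ (t+1) u 1)⁻¹ *
      ∫ u in Ioi 0, z⁻¹ * Real.rpowIntegrand₀₁ (t+1) u z := by
    intro z hz
    rw [integral_const_mul]
    have := Real.rpow_eq_const_mul_integral hp hz.le
    rw [Real.rpow_add_one hz.ne'] at this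
    field_simp
    field_simp at this
    linarith
  have hint : ∀ z : ℝ, 0 < z → IntegrableOn (fun u => z⁻¹ * Real.rpowIntegrand₀₁ (t+1) u z) (Ioi 0) :=
    fun z hz => (Real.integrableOn_rpowIntegrand₀₁_Ioi hp hz.le).const_mul _
  have e1 : ∀ {ι : Type} [Fintype ι] (p x : ι → ℝ) (_ : ∀ i, 0 < x i), ∑ i, p i * x i ^ t =
      (∫ u in Ioi 0, Real.rpowIntegrand₀₁ (t+1) u 1)⁻¹ *
      ∫ u in Ioi 0, ∑ i, p i * ((x i)⁻¹ * Real.rpowIntegrand₀₁ (t+1) u (x i)) := by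
    intro ι _ p x hx
    rw [integral_finsetSum _ (fun i _ => (hint _ (hx i)).const_mul _), Finset.mul_sum]
    refine Finset.sum_congr rfl fun i _ => ?_
    rw [integral_const_mul, key _ (hx i)]
    ring
  rw [e1 p x hx, e1 q y hy]
  refine mul_le_mul_of_nonneg_left ?_ (inv_nonneg.2 (Real.integral_rpowIntegrand₀₁_one_pos hp).le)
  refine setIntegral_mono_on (integrable_finsetSum _ (fun i _ => (hint _ (hx i)).const_mul _))
    (integrable_finsetSum _ (fun i _ => (hint _ (hy i)).const_mul _)) measurableSet_Ioi ?_
  intro u hu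
  have hu : 0 < u := hu
  have e2 : ∀ {ι : Type} [Fintype ι] (p x : ι → ℝ) (_ : ∀ i, 0 < x i),
      ∑ i, p i * ((x i)⁻¹ * Real.rpowIntegrand₀₁ (t+1) u (x i)) = u ^ t * ∑ i, p i / (x i + u) := by
    intro ι _ p x hx
    rw [Finset.mul_sum]
    refine Finset.sum_congr rfl fun i _ => ?_
    have := hx i
    rw [Real.rpowIntegrand₀₁, Real.rpow_add_one hu.ne', inv_sub_inv hu.ne' (by positivity)]
    field_simp
    ring
  rw [e2 p x hx, e2 q y hy]
  exact mul_le_mul_of_nonneg_left (h u hu) (by positivity)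

open MeasureTheory Set in
theorem aux_pos {ι κ : Type} [Fintype ι] [Fintype κ] (p x : ι → ℝ) (q y : κ → ℝ)
    (hx : ∀ i, 0 < x i) (hy : ∀ i, 0 < y i) (hpq : ∑ i, p i = ∑ j, q j)
    (h : ∀ s : ℝ, 0 < s → ∑ i, p i / (x i + s) ≤ ∑ j, q j / (y j + s))
    (t : ℝ) (ht : 0 < t) (ht' : t < 1) :
    ∑ j, q j * y j ^ t ≤ ∑ i, p i * x i ^ t := by
  have hp : t ∈ Ioo (0:ℝ) 1 := ⟨ht, ht'⟩
  have hint : ∀ z : ℝ, 0 < z → IntegrableOn (fun u => Real.rpowIntegrand₀₁ t u z) (Ioi 0) :=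
    fun z hz => (Real.integrableOn_rpowIntegrand₀₁_Ioi hp hz.le)
  have e1 : ∀ {ι : Type} [Fintype ι] (p x : ι → ℝ) (_ : ∀ i, 0 < x i), ∑ i, p i * x i ^ t =
      (∫ u in Ioi 0, Real.rpowIntegrand₀₁ t u 1)⁻¹ *
      ∫ u in Ioi 0, ∑ i, p i * (Real.rpowIntegrand₀₁ t u (x i)) := by
    intro ι _ p x hx
    rw [integral_finsetSum _ (fun i _ => (hint _ (hx i)).const_mul _), Finset.mul_sum]
    refine Finset.sum_congr rfl fun i _ => ?_
    rw [integral_const_mul, Real.rpow_eq_const_mul_integral hp (hx i).le]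
    ring
  rw [e1 p x hx, e1 q y hy]
  refine mul_le_mul_of_nonneg_left ?_ (inv_nonneg.2 (Real.integral_rpowIntegrand₀₁_one_pos hp).le)
  refine setIntegral_mono_on (integrable_finsetSum _ (fun i _ => (hint _ (hy i)).const_mul _))
    (integrable_finsetSum _ (fun i _ => (hint _ (hx i)).const_mul _)) measurableSet_Ioi ?_
  intro u hu
  have hu : 0 < u := hu
  have e2 : ∀ {ι : Type} [Fintype ι] (p x : ι → ℝ) (_ : ∀ i, 0 < x i),
      ∑ i, p i * (Real.rpowIntegrand₀₁ t u (x i)) = u ^ t * (u⁻¹ * ∑ i, p i - ∑ i, p i / (x i + u)) := by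
    intro ι _ p x hx
    rw [Finset.mul_sum, ← Finset.sum_sub_distrib, Finset.mul_sum]
    refine Finset.sum_congr rfl fun i _ => ?_
    rw [Real.rpowIntegrand₀₁, add_comm u]
    ring
  rw [e2 p x hx, e2 q y hy, hpq]
  exact mul_le_mul_of_nonneg_left (by linarith [h u hu]) (by positivity)

theorem diagData (A : Matrix (Fin n) (Fin n) ℂ) (hA : A.PosDef) :
    ∃ (U : Matrix (Fin n) (Fin n) ℂ) (a : Fin n → ℝ), Uᴴ * U = 1 ∧ U * Uᴴ = 1 ∧ (∀ i, 0 < a i) ∧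
      ∀ f : ℝ → ℝ, cfc f A = U * diagonal (fun i => (f (a i) : ℂ)) * Uᴴ := by
  refine ⟨hA.1.eigenvectorUnitary, hA.1.eigenvalues, ?_, ?_, hA.eigenvalues_pos, fun f => ?_⟩
  · exact Unitary.coe_star_mul_self _
  · exact Unitary.coe_mul_star_self _
  · rw [hA.1.cfc_eq, IsHermitian.cfc, Unitary.conjStarAlgAut_apply]
    rfl

theorem cfcM_congr {A : Matrix (Fin n) (Fin n) ℂ} (hA : A.PosDef) {f g : ℝ → ℝ}
    (h : ∀ x, 0 < x → f x = g x) : cfc f A = cfc g A := by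
  obtain ⟨U, a, -, -, ha, hf⟩ := diagData A hA
  rw [hf, hf]
  simp [h _ (ha _)]

theorem cfcM_mul {A : Matrix (Fin n) (Fin n) ℂ} (f g : ℝ → ℝ) :
    cfc f A * cfc g A = cfc (fun x => f x * g x) A :=
  (cfc_mul f g A (A.finite_real_spectrum.continuousOn _) (A.finite_real_spectrum.continuousOn _)).symm

theorem cfcM_add {A : Matrix (Fin n) (Fin n) ℂ} (f g : ℝ → ℝ) :
    cfc f A + cfc g A = cfc (fun x => f x + g x) A :=
  (cfc_add (a := A) f g (A.finite_real_spectrum.continuousOn _) (A.finite_real_spectrum.continuousOn _)).symm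

theorem cfcM_herm {A : Matrix (Fin n) (Fin n) ℂ} (f : ℝ → ℝ) : (cfc f A)ᴴ = cfc f A :=
  cfc_predicate f A

theorem cfcM_id {A : Matrix (Fin n) (Fin n) ℂ} (hA : A.PosDef) : cfc (fun x : ℝ => x) A = A :=
  cfc_id' ℝ A hA.1

theorem cfcM_one {A : Matrix (Fin n) (Fin n) ℂ} (hA : A.PosDef) : cfc (fun _ : ℝ => (1:ℝ)) A = 1 :=
  cfc_const_one ℝ A hA.1

theorem cfcM_smul {A : Matrix (Fin n) (Fin n) ℂ} (hA : A.PosDef) (s : ℝ) (f : ℝ → ℝ) :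
    cfc (fun x : ℝ => s * f x) A = (s : ℂ) • cfc f A := by
  obtain ⟨U, a, -, -, ha, hf⟩ := diagData A hA
  rw [hf, hf, ← Matrix.smul_mul, ← Matrix.mul_smul]
  congr 2
  ext i j
  simp [diagonal_apply]

theorem posDef_conj {B X Y : Matrix (Fin n) (Fin n) ℂ} (hB : B.PosDef) (h : X * Y = 1) :
    (X * B * Xᴴ).PosDef :=
  (IsUnit.posDef_star_right_conjugate_iff (IsUnit.of_mul_eq_one Y h)).2 hB

theorem posDef_cfc {A : Matrix (Fin n) (Fin n) ℂ} (hA : A.PosDef) (f : ℝ → ℝ)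
    (h : ∀ x, 0 < x → 0 < f x) : (cfc f A).PosDef := by
  obtain ⟨U, a, h1, h2, ha, hf⟩ := diagData A hA
  rw [hf]
  refine posDef_conj ?_ h2
  rw [posDef_diagonal_iff]
  intro i
  exact_mod_cast h _ (ha i)

theorem mPow_mul {A : Matrix (Fin n) (Fin n) ℂ} (hA : A.PosDef) (s t : ℝ) :
    mPow A s * mPow A t = mPow A (s + t) := by
  rw [mPow, mPow, mPow, cfcM_mul]
  exact cfcM_congr hA fun x hx => (Real.rpow_add hx _ _).symm

theorem mPow_posDef {A : Matrix (Fin n) (Fin n) ℂ} (hA : A.PosDef) (t : ℝ) : (mPow A t).PosDef :=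
  posDef_cfc hA _ fun _ hx => Real.rpow_pos_of_pos hx _

theorem mPow_one {A : Matrix (Fin n) (Fin n) ℂ} (hA : A.PosDef) : mPow A 1 = A := by
  simp [mPow, cfcM_id hA]

theorem mPow_zero {A : Matrix (Fin n) (Fin n) ℂ} (hA : A.PosDef) : mPow A 0 = 1 := by
  simp [mPow, cfcM_one hA]

theorem mPow_herm {A : Matrix (Fin n) (Fin n) ℂ} (t : ℝ) : (mPow A t)ᴴ = mPow A t := cfcM_herm _

theorem tr_diag (W : Matrix (Fin n) (Fin n) ℂ) (d e : Fin n → ℝ) :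
    (diagonal (fun i => (d i : ℂ)) * W * diagonal (fun i => (e i : ℂ)) * Wᴴ).trace =
      ((∑ j, ∑ k, d j * e k * Complex.normSq (W j k) : ℝ) : ℂ) := by
  rw [trace]
  push_cast
  refine Finset.sum_congr rfl fun j _ => ?_
  rw [diag_apply, mul_apply]
  refine Finset.sum_congr rfl fun k _ => ?_
  rw [mul_diagonal, diagonal_mul, conjTranspose_apply, Complex.star_def, Complex.normSq_eq_conj_mul_self]
  ring

theorem scalar_ineq (α c : ℝ) (hc : 0 < c) (z y : ℂ) :
    2 * (α * (z * y).re) - c * Complex.normSq y ≤ α ^ 2 * Complex.normSq z / c := by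
  rw [le_div_iff₀ hc]
  simp only [Complex.normSq_apply, Complex.mul_re]
  nlinarith [sq_nonneg (c * y.re - α * z.re), sq_nonneg (c * y.im + α * z.im)]

/-- the quadratic functional -/
def QF (A B : Matrix (Fin n) (Fin n) ℂ) (s : ℝ) (Y : Matrix (Fin n) (Fin n) ℂ) : ℝ :=
  2 * (A * Y).trace.re - (B * Y * Yᴴ).trace.re - s * (A * Yᴴ * Y).trace.re

theorem mainData (A B : Matrix (Fin n) (Fin n) ℂ) (hA : A.PosDef) (hB : B.PosDef) :
    ∃ (a b : Fin n → ℝ) (w : Fin n → Fin n → ℝ), (∀ i, 0 < a i) ∧ (∀ i, 0 < b i) ∧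
      (∀ f g : ℝ → ℝ, (cfc f A * cfc g B).trace =
        ((∑ i : Fin n × Fin n, f (a i.1) * g (b i.2) * w i.1 i.2 : ℝ) : ℂ)) ∧
      ∀ s : ℝ, 0 < s →
        (∀ Y, QF A B s Y ≤ ∑ i : Fin n × Fin n, a i.1 ^ 2 * w i.1 i.2 / (b i.2 + s * a i.1)) ∧
        ∃ Y, QF A B s Y = ∑ i : Fin n × Fin n, a i.1 ^ 2 * w i.1 i.2 / (b i.2 + s * a i.1) := by
  obtain ⟨U, a, hU1, hU2, ha, hfA⟩ := diagData A hA
  obtain ⟨V, b, hV1, hV2, hb, hfB⟩ := diagData B hB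
  refine ⟨a, b, fun j k => Complex.normSq ((Uᴴ * V) j k), ha, hb, fun f g => ?_, fun s hs => ?_⟩
  · rw [hfA, hfB, Fintype.sum_prod_type]
    dsimp only
    rw [← tr_diag (Uᴴ * V) (fun j => f (a j)) (fun k => g (b k)), conjTranspose_mul, conjTranspose_conjTranspose]
    rw [mul_assoc U, mul_assoc U, trace_mul_comm U]
    simp only [mul_assoc]
  have hA' := cfcM_id hA
  have hB' := cfcM_id hB
  rw [hfA] at hA'
  rw [hfB] at hB'
  have hQ : ∀ Y, QF A B s (V * Y * Uᴴ) = ∑ i : Fin n × Fin n,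
      (2 * (a i.1 * ((Uᴴ * V) i.1 i.2 * Y i.2 i.1).re) - (b i.2 + s * a i.1) * Complex.normSq (Y i.2 i.1)) := by
    intro Y
    have e1 : (A * (V * Y * Uᴴ)).trace = ∑ j, ∑ k, (a j : ℂ) * ((Uᴴ * V) j k * Y k j) := by
      have : (A * (V * Y * Uᴴ)).trace = (diagonal (fun i => (a i : ℂ)) * ((Uᴴ * V) * Y)).trace := by
        rw [← hA', mul_assoc U, mul_assoc U, trace_mul_comm U]
        simp only [mul_assoc, hU1, mul_one]
      rw [this, trace]
      refine Finset.sum_congr rfl fun j _ => ?_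
      rw [diag_apply, diagonal_mul, mul_apply, Finset.mul_sum]
    have e2 : (B * (V * Y * Uᴴ) * (V * Y * Uᴴ)ᴴ).trace =
        ((∑ k, ∑ j, b k * 1 * Complex.normSq (Y k j) : ℝ) : ℂ) := by
      rw [← tr_diag Y b (fun _ => 1), ← hB']
      have : B = B := rfl
      simp only [conjTranspose_mul, conjTranspose_conjTranspose]
      rw [mul_assoc V, mul_assoc V, mul_assoc V, trace_mul_comm V]
      have h1 : ∀ Z, Uᴴ * (U * Z) = Z := fun Z => by rw [← mul_assoc, hU1, one_mul]
      have h2 : ∀ Z, Vᴴ * (V * Z) = Z := fun Z => by rw [← mul_assoc, hV1, one_mul]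
      simp [mul_assoc, h1, h2, hV1]
    have e3 : (A * (V * Y * Uᴴ)ᴴ * (V * Y * Uᴴ)).trace =
        ((∑ k, ∑ j, 1 * a j * Complex.normSq (Y k j) : ℝ) : ℂ) := by
      rw [← tr_diag Y (fun _ => 1) a, ← hA']
      simp only [conjTranspose_mul, conjTranspose_conjTranspose]
      rw [mul_assoc U, mul_assoc U, mul_assoc U, trace_mul_comm U]
      have h1 : ∀ Z, Uᴴ * (U * Z) = Z := fun Z => by rw [← mul_assoc, hU1, one_mul]
      have h2 : ∀ Z, Vᴴ * (V * Z) = Z := fun Z => by rw [← mul_assoc, hV1, one_mul]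
      have h3 : (diagonal (fun _ : Fin n => ((1:ℝ):ℂ))) = 1 := by simp
      rw [h3, one_mul, mul_assoc Y, trace_mul_comm Y]
      simp [mul_assoc, h1, h2, hU1]
    rw [QF, e1, e2, e3, Complex.ofReal_re, Complex.ofReal_re, Fintype.sum_prod_type,
      Finset.sum_comm (f := fun k j => b k * 1 * Complex.normSq (Y k j)),
      Finset.sum_comm (f := fun k j => 1 * a j * Complex.normSq (Y k j))]
    simp only [Complex.re_sum, Complex.re_ofReal_mul, Finset.mul_sum, ← Finset.sum_sub_distrib]
    refine Finset.sum_congr rfl fun j _ => Finset.sum_congr rfl fun k _ => ?_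
    ring
  have hpos : ∀ i : Fin n × Fin n, 0 < b i.2 + s * a i.1 := fun i => by
    have := ha i.1
    have := hb i.2
    positivity
  constructor
  · intro Y
    have : Y = V * (Vᴴ * Y * U) * Uᴴ := by
      rw [mul_assoc, mul_assoc (Vᴴ * Y), hU2, mul_one, ← mul_assoc, hV2, one_mul]
    rw [this, hQ]
    exact Finset.sum_le_sum fun i _ => scalar_ineq _ _ (hpos i) _ _
  · refine ⟨V * (Matrix.of fun k j => ((a j / (b k + s * a j) : ℝ) : ℂ) * star ((Uᴴ * V) j k)) * Uᴴ, ?_⟩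
    rw [hQ]
    refine Finset.sum_congr rfl fun i _ => ?_
    have := hpos i
    have e : ∀ (z : ℂ) (r : ℝ), (z * ((r : ℂ) * star z)).re = r * Complex.normSq z := by
      intro z r
      rw [mul_left_comm, Complex.star_def, Complex.mul_conj, ← Complex.ofReal_mul, Complex.ofReal_re]
    rw [of_apply, e, Complex.normSq_mul, Complex.star_def, Complex.normSq_conj, Complex.normSq_ofReal]
    dsimp only
    field_simp
    ring

theorem R2_le (A B G : Matrix (Fin n) (Fin n) ℂ) (hG : G.PosDef)
    (hB : B = G * A * G) (s : ℝ) (hs : 0 < s) :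
    QF A B s (cfc (fun x : ℝ => (x^2 + s)⁻¹) G) = (A * cfc (fun x : ℝ => (x^2 + s)⁻¹) G).trace.re := by
  have hN : (cfc (fun x : ℝ => (x^2 + s)⁻¹) G)ᴴ = cfc (fun x : ℝ => (x^2 + s)⁻¹) G := cfcM_herm _
  have hc : G * (cfc (fun x : ℝ => (x^2 + s)⁻¹) G * cfc (fun x : ℝ => (x^2 + s)⁻¹) G) * G
      + (s : ℂ) • (cfc (fun x : ℝ => (x^2 + s)⁻¹) G * cfc (fun x : ℝ => (x^2 + s)⁻¹) G)
      = cfc (fun x : ℝ => (x^2 + s)⁻¹) G := by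
    rw [cfcM_mul, ← cfcM_smul hG]
    have e : ∀ f : ℝ → ℝ, G * cfc f G * G = cfc (fun x => x * f x * x) G := by
      intro f
      rw [← cfcM_mul, ← cfcM_mul, cfcM_id hG]
    rw [e, cfcM_add]
    refine cfcM_congr hG fun x hx => ?_
    field_simp
  rw [QF, hN]
  have key := congrArg (fun Z => (A * Z).trace.re) hc
  simp only [mul_add, trace_add, Complex.add_re, Matrix.mul_smul, trace_smul, smul_eq_mul, Complex.re_ofReal_mul] at key
  have e : (B * cfc (fun x : ℝ => (x^2 + s)⁻¹) G * cfc (fun x : ℝ => (x^2 + s)⁻¹) G).trace =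
     (A * (G * (cfc (fun x : ℝ => (x^2 + s)⁻¹) G * cfc (fun x : ℝ => (x^2 + s)⁻¹) G) * G)).trace := by
    rw [hB, mul_assoc G, mul_assoc G, mul_assoc G, trace_mul_comm G]
    simp only [mul_assoc]
  rw [e, mul_assoc A]
  linarith

theorem le_R3 (A B S C : Matrix (Fin n) (Fin n) ℂ) (hC : C.PosDef) (hS : Sᴴ = S)
    (hA : A = S * S) (hB : B = S * C * S) (s : ℝ) (hs : 0 < s) (Y : Matrix (Fin n) (Fin n) ℂ) :
    QF A B s Y ≤ (A * (cfc (fun x : ℝ => (x + s)⁻¹) C)).trace.re := by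
  set K := cfc (fun x : ℝ => (x + s)⁻¹) C with hKdef
  have hK : Kᴴ = K := cfcM_herm _
  have hCh : Cᴴ = C := hC.1
  have hKC : K * C + (s : ℂ) • K = 1 := by
    have e : K * C = cfc (fun x : ℝ => (x + s)⁻¹ * x) C := by
      rw [← cfcM_mul, cfcM_id hC]
    rw [e, hKdef, ← cfcM_smul hC, cfcM_add, ← cfcM_one hC]
    refine cfcM_congr hC fun x hx => ?_
    field_simp
  have h1 : 0 ≤ ((Yᴴ * S - S * K) * C * (Yᴴ * S - S * K)ᴴ).trace.re :=
    (Complex.le_def.1 (hC.posSemidef.mul_mul_conjTranspose_same _).trace_nonneg).1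
  have h2 : 0 ≤ ((Y * S - S * K) * (Y * S - S * K)ᴴ).trace.re :=
    (Complex.le_def.1 (posSemidef_self_mul_conjTranspose _).trace_nonneg).1
  have hre : ∀ M : Matrix (Fin n) (Fin n) ℂ, Mᴴ.trace.re = M.trace.re := by
    intro M
    rw [trace_conjTranspose, Complex.star_def, Complex.conj_re]
  have e1 : ((Yᴴ * S - S * K) * C * (Yᴴ * S - S * K)ᴴ).trace.re =
      (B * Y * Yᴴ).trace.re - 2 * (S * (K * C) * S * Y).trace.re + (S * (K * C) * K * S).trace.re := by
    have x1 : (Yᴴ * S - S * K) * C * (Yᴴ * S - S * K)ᴴ =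
        Yᴴ * (S * C * S * Y) - (S * (K * C) * S * Y)ᴴ - S * (K * C) * S * Y + S * (K * C) * K * S := by
      simp only [conjTranspose_sub, conjTranspose_mul, conjTranspose_conjTranspose, hS, hK, hCh]
      noncomm_ring
    rw [x1]
    simp only [trace_add, trace_sub, Complex.add_re, Complex.sub_re, hre]
    rw [trace_mul_comm Yᴴ, hB]
    ring
  have e2 : ((Y * S - S * K) * (Y * S - S * K)ᴴ).trace.re =
      (A * Yᴴ * Y).trace.re - 2 * (S * K * S * Y).trace.re + (S * K * K * S).trace.re := by
    have x1 : (Y * S - S * K) * (Y * S - S * K)ᴴ =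
        Y * (S * S * Yᴴ) - Y * (S * K * S) - (Y * (S * K * S))ᴴ + S * K * K * S := by
      simp only [conjTranspose_sub, conjTranspose_mul, conjTranspose_conjTranspose, hS, hK]
      noncomm_ring
    rw [x1]
    simp only [trace_add, trace_sub, Complex.add_re, Complex.sub_re, hre]
    rw [trace_mul_comm Y, trace_mul_comm Y, hA]
    ring
  have k1 : (S * (K * C) * S * Y).trace.re + s * (S * K * S * Y).trace.re = (A * Y).trace.re := by
    have := congrArg (fun Z => (S * Z * S * Y).trace.re) hKC
    simpa [mul_add, add_mul, ← hA] using this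
  have k2 : (S * (K * C) * K * S).trace.re + s * (S * K * K * S).trace.re = (A * K).trace.re := by
    have := congrArg (fun Z => (S * Z * K * S).trace.re) hKC
    have e : (A * K).trace = (S * K * S).trace := by
      rw [hA, mul_assoc, trace_mul_comm, mul_assoc]
    rw [e]
    simpa [mul_add, add_mul] using this
  rw [e1] at h1
  rw [e2] at h2
  rw [QF]
  nlinarith [mul_nonneg hs.le h2]

theorem geo_mul {A B : Matrix (Fin n) (Fin n) ℂ} (hA : A.PosDef) (hB : B.PosDef) :
    (mGeo A⁻¹ B (1/2)).PosDef ∧ B = mGeo A⁻¹ B (1/2) * A * mGeo A⁻¹ B (1/2) := by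
  have hI : (A⁻¹).PosDef := hA.inv
  have hRS : mPow A⁻¹ (1/2) * mPow A⁻¹ (-(1/2)) = 1 := by
    rw [mPow_mul hI, add_neg_cancel, mPow_zero hI]
  have hSR : mPow A⁻¹ (-(1/2)) * mPow A⁻¹ (1/2) = 1 := by
    rw [mPow_mul hI, neg_add_cancel, mPow_zero hI]
  have hRR : mPow A⁻¹ (1/2) * mPow A⁻¹ (1/2) = A⁻¹ := by
    rw [mPow_mul hI, add_halves, mPow_one hI]
  have hAu : IsUnit A.det := (Matrix.isUnit_iff_isUnit_det A).1 hA.isUnit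
  have hRAR : mPow A⁻¹ (1/2) * A * mPow A⁻¹ (1/2) = 1 := by
    have : mPow A⁻¹ (1/2) * (mPow A⁻¹ (1/2) * A) = 1 := by
      rw [← mul_assoc, hRR, nonsing_inv_mul _ hAu]
    exact mul_eq_one_comm.1 this
  have hC : (mPow A⁻¹ (-(1/2)) * B * mPow A⁻¹ (-(1/2))).PosDef := by
    have := posDef_conj hB hSR
    rwa [mPow_herm] at this
  constructor
  · have := posDef_conj (mPow_posDef hC (1/2)) hRS
    rwa [mPow_herm] at this
  · rw [mGeo]
    have h2 : mPow (mPow A⁻¹ (-(1/2)) * B * mPow A⁻¹ (-(1/2))) (1/2) *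
        mPow (mPow A⁻¹ (-(1/2)) * B * mPow A⁻¹ (-(1/2))) (1/2) =
        mPow A⁻¹ (-(1/2)) * B * mPow A⁻¹ (-(1/2)) := by
      rw [mPow_mul hC, add_halves, mPow_one hC]
    generalize mPow (mPow A⁻¹ (-(1/2)) * B * mPow A⁻¹ (-(1/2))) (1/2) = K at h2
    generalize mPow A⁻¹ (1/2) = R at *
    generalize mPow A⁻¹ (-(1/2)) = S at *
    calc B = (R * S) * B * (S * R) := by rw [hRS, hSR, one_mul, mul_one]
      _ = R * (S * B * S) * R := by simp only [mul_assoc]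
      _ = R * (K * K) * R := by rw [h2]
      _ = R * K * (R * A * R) * K * R := by rw [hRAR]; simp only [mul_assoc, one_mul]
      _ = _ := by simp only [mul_assoc]

theorem core (A B : Matrix (Fin n) (Fin n) ℂ) (hA : A.PosDef) (hB : B.PosDef) (t : ℝ) :
    ∃ α β γ : ℝ, (mSp A B t).trace = α ∧ (mPow A (1 - t) * mPow B t).trace = β ∧
      (mGeo A B t).trace = γ ∧ (-1 < t → t < 0 → α ≤ β ∧ β ≤ γ) ∧
      (0 < t → t < 1 → γ ≤ β ∧ β ≤ α) := by
  obtain ⟨hG, hBG⟩ := geo_mul hA hB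
  have hST : mPow A (1/2) * mPow A (-(1/2)) = 1 := by
    rw [mPow_mul hA, add_neg_cancel, mPow_zero hA]
  have hTS : mPow A (-(1/2)) * mPow A (1/2) = 1 := by
    rw [mPow_mul hA, neg_add_cancel, mPow_zero hA]
  have hSS : A = mPow A (1/2) * mPow A (1/2) := by
    rw [mPow_mul hA, add_halves, mPow_one hA]
  have hC : (mPow A (-(1/2)) * B * mPow A (-(1/2))).PosDef := by
    have := posDef_conj hB hTS
    rwa [mPow_herm] at this
  have hBS : B = mPow A (1/2) * (mPow A (-(1/2)) * B * mPow A (-(1/2))) * mPow A (1/2) := by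
    calc B = (mPow A (1/2) * mPow A (-(1/2))) * B * (mPow A (-(1/2)) * mPow A (1/2)) := by
          rw [hST, hTS, one_mul, mul_one]
      _ = _ := by simp only [mul_assoc]
  have tg : (mGeo A B t).trace =
      (cfc (fun x : ℝ => x) A * mPow (mPow A (-(1/2)) * B * mPow A (-(1/2))) t).trace := by
    rw [cfcM_id hA, mGeo, trace_mul_comm, ← mul_assoc, ← hSS]
  have ts : (mSp A B t).trace =
      (cfc (fun x : ℝ => x) A * cfc (fun x : ℝ => x ^ t * x ^ t) (mGeo A⁻¹ B (1/2))).trace := by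
    rw [cfcM_id hA, mSp, trace_mul_comm, ← mul_assoc, trace_mul_comm, mPow, cfcM_mul]
  have hr2 : ∀ s : ℝ, 0 < s → _ := fun s hs => R2_le A B _ hG hBG s hs
  have hr3 : ∀ s : ℝ, 0 < s → _ := fun s hs => le_R3 A B _ _ hC (mPow_herm _) hSS hBS s hs
  generalize mGeo A⁻¹ B (1/2) = G at *
  generalize mPow A (-(1/2)) * B * mPow A (-(1/2)) = C at *
  obtain ⟨a, b, w, ha, hb, htr, hvar⟩ := mainData A B hA hB
  obtain ⟨a1, g, w1, ha1, hg, htr1, -⟩ := mainData A G hA hG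
  obtain ⟨a2, c, w2, ha2, hc, htr2, -⟩ := mainData A C hA hC
  -- total masses
  have m0 := htr (fun x => x) (fun _ => 1)
  have m1 := htr1 (fun x => x) (fun _ => 1)
  have m2 := htr2 (fun x => x) (fun _ => 1)
  rw [cfcM_id hA, cfcM_one hB, mul_one] at m0
  rw [cfcM_id hA, cfcM_one hG, mul_one, m0] at m1
  rw [cfcM_id hA, cfcM_one hC, mul_one, m0] at m2
  have m1 := Complex.ofReal_injective m1
  have m2 := Complex.ofReal_injective m2
  have hq : ∀ s : ℝ, ∑ i : Fin n × Fin n, (a i.1 * w i.1 i.2) / (b i.2 / a i.1 + s) =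
      ∑ i : Fin n × Fin n, a i.1 ^ 2 * w i.1 i.2 / (b i.2 + s * a i.1) := by
    intro s
    refine Finset.sum_congr rfl fun i _ => ?_
    have := (ha i.1).ne'
    rw [div_add' _ _ _ this, div_div_eq_mul_div]
    ring
  have H1 : ∀ s : ℝ, 0 < s → ∑ i : Fin n × Fin n, (a1 i.1 * w1 i.1 i.2) / (g i.2 ^ 2 + s) ≤
      ∑ i : Fin n × Fin n, (a i.1 * w i.1 i.2) / (b i.2 / a i.1 + s) := by
    intro s hs
    rw [hq]
    refine le_trans (le_of_eq ?_) ((hvar s hs).1 (cfc (fun x : ℝ => (x^2 + s)⁻¹) G))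
    have := htr1 (fun x => x) (fun x => (x^2 + s)⁻¹)
    rw [cfcM_id hA] at this
    rw [hr2 s hs, this, Complex.ofReal_re]
    refine Finset.sum_congr rfl fun i _ => ?_
    ring
  have H2 : ∀ s : ℝ, 0 < s → ∑ i : Fin n × Fin n, (a i.1 * w i.1 i.2) / (b i.2 / a i.1 + s) ≤
      ∑ i : Fin n × Fin n, (a2 i.1 * w2 i.1 i.2) / (c i.2 + s) := by
    intro s hs
    rw [hq]
    obtain ⟨Y, hY⟩ := (hvar s hs).2
    rw [← hY]
    refine le_trans (hr3 s hs Y) (le_of_eq ?_)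
    have := htr2 (fun x => x) (fun x => (x + s)⁻¹)
    rw [cfcM_id hA] at this
    rw [this, Complex.ofReal_re]
    refine Finset.sum_congr rfl fun i _ => ?_
    ring
  refine ⟨∑ i : Fin n × Fin n, (a1 i.1 * w1 i.1 i.2) * (g i.2 ^ 2) ^ t,
    ∑ i : Fin n × Fin n, (a i.1 * w i.1 i.2) * (b i.2 / a i.1) ^ t,
    ∑ i : Fin n × Fin n, (a2 i.1 * w2 i.1 i.2) * c i.2 ^ t, ?_, ?_, ?_, ?_, ?_⟩
  · rw [ts, htr1]
    congr 1
    refine Finset.sum_congr rfl fun i _ => ?_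
    have := hg i.2
    rw [pow_two, Real.mul_rpow this.le this.le]
    ring
  · rw [mPow, mPow, htr]
    congr 1
    refine Finset.sum_congr rfl fun i _ => ?_
    rw [Real.div_rpow (hb _).le (ha _).le, Real.rpow_sub (ha _), Real.rpow_one]
    ring
  · rw [tg, mPow, htr2]
    congr 1
    refine Finset.sum_congr rfl fun i _ => ?_
    ring
  · intro h1 h2
    exact ⟨aux_neg _ _ _ _ (fun i => by have := hg i.2; positivity) (fun i => div_pos (hb _) (ha _)) H1 t h1 h2,
      aux_neg _ _ _ _ (fun i => div_pos (hb _) (ha _)) (fun i => hc _) H2 t h1 h2⟩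
  · intro h1 h2
    refine ⟨aux_pos _ _ _ _ (fun i => div_pos (hb _) (ha _)) (fun i => hc _) ?_ H2 t h1 h2,
      aux_pos _ _ _ _ (fun i => by have := hg i.2; positivity) (fun i => div_pos (hb _) (ha _)) ?_ H1 t h1 h2⟩
    · simpa using m2
    · simpa using m1.symm

theorem one_case (A B : Matrix (Fin n) (Fin n) ℂ) (hA : A.PosDef) (hB : B.PosDef) :
    mSp A B 1 = B ∧ mPow A (1 - 1) * mPow B 1 = B ∧ mGeo A B 1 = B := by
  obtain ⟨hG, hBG⟩ := geo_mul hA hB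
  have hST : mPow A (1/2) * mPow A (-(1/2)) = 1 := by
    rw [mPow_mul hA, add_neg_cancel, mPow_zero hA]
  have hTS : mPow A (-(1/2)) * mPow A (1/2) = 1 := by
    rw [mPow_mul hA, neg_add_cancel, mPow_zero hA]
  have hC : (mPow A (-(1/2)) * B * mPow A (-(1/2))).PosDef := by
    have := posDef_conj hB hTS
    rwa [mPow_herm] at this
  refine ⟨?_, ?_, ?_⟩
  · rw [mSp, mPow_one hG, ← hBG]
  · rw [sub_self, mPow_zero hA, mPow_one hB, one_mul]
  · rw [mGeo, mPow_one hC]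
    calc _ = (mPow A (1/2) * mPow A (-(1/2))) * B * (mPow A (-(1/2)) * mPow A (1/2)) := by
          simp only [mul_assoc]
      _ = B := by rw [hST, hTS, one_mul, mul_one]

/-- Corollary 4.10 (first part): for positive definite matrices `A, B` and
`-1/2 ≤ t ≤ 1`, `t ≠ 0`:
`-Tr T^sp_t(A|B) ≤ D_t(A|B) ≤ -Tr T_t(A|B)`, i.e.
`Tr[(A - A spₜ B)/t] ≤ Tr[(A - A^(1-t) B^t)/t] ≤ Tr[(A - A ♯ₜ B)/t]`. -/
theorem stmt_17 (A B : Matrix (Fin n) (Fin n) ℂ) (hA : A.PosDef) (hB : B.PosDef)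
    (t : ℝ) (ht₁ : -(1/2) ≤ t) (ht₂ : t ≤ 1) (ht₀ : t ≠ 0) :
    (A - mSp A B t).trace / (t : ℂ) ≤ (A - mPow A (1 - t) * mPow B t).trace / (t : ℂ) ∧
      (A - mPow A (1 - t) * mPow B t).trace / (t : ℂ) ≤ (A - mGeo A B t).trace / (t : ℂ) := by
  rcases eq_or_lt_of_le ht₂ with rfl | ht₂
  · obtain ⟨h1, h2, h3⟩ := one_case A B hA hB
    rw [h1, h2, h3]
    exact ⟨le_rfl, le_rfl⟩
  obtain ⟨α, β, γ, h1, h2, h3, hneg, hpos⟩ := core A B hA hB t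
  have hAr : A.trace = ((A.trace.re : ℝ) : ℂ) :=
    Complex.eq_re_of_ofReal_le (r := 0) (by simpa using hA.posSemidef.trace_nonneg)
  rw [trace_sub, trace_sub, trace_sub, h1, h2, h3, hAr]
  rcases lt_or_gt_of_ne ht₀ with h | h
  · obtain ⟨k1, k2⟩ := hneg (by linarith) h
    constructor
    · have : (A.trace.re - α) / t ≤ (A.trace.re - β) / t :=
        div_le_div_of_nonpos_of_le h.le (by linarith)
      exact_mod_cast this
    · have : (A.trace.re - β) / t ≤ (A.trace.re - γ) / t :=
        div_le_div_of_nonpos_of_le h.le (by linarith)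
      exact_mod_cast this
  · obtain ⟨k1, k2⟩ := hpos h ht₂
    constructor
    · have : (A.trace.re - α) / t ≤ (A.trace.re - β) / t :=
        div_le_div_of_nonneg_right (by linarith) h.le
      exact_mod_cast this
    · have : (A.trace.re - β) / t ≤ (A.trace.re - γ) / t :=
        div_le_div_of_nonneg_right (by linarith) h.le
      exact_mod_cast this
end
end
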